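/- For every fixed integer N ≥ 2, limsup_{m→∞} D_{ℝ,m}(N)^{1/m} ≥ 27^{1/8}; in particular the real polynomial Bohnenblust–Hille inequality restricted to polynomials in N variables has exponentially growing constants. -/

import Mathlib

open MvPolynomial Filter

/-- The sup norm of a real polynomial in `n` variables over the cube `[-1,1]^n`. -/
noncomputable def supNorm {n : ℕ} (P : MvPolynomial (Fin n) ℝ) : ℝ :=
  sSup {y : ℝ | ∃ x : Fin n → ℝ, (∀ i, |x i| ≤ 1) ∧ y = |eval x P|}

/-- The `ℓ_p` norm of the coefficients of a real polynomial. -/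
noncomputable def lpNorm {n : ℕ} (p : ℝ) (P : MvPolynomial (Fin n) ℝ) : ℝ :=
  (∑ α ∈ P.support, |coeff α P| ^ p) ^ (1 / p)

/-- The real polynomial Bohnenblust–Hille constant `D_{ℝ,m}`. -/
noncomputable def BHconst (m : ℕ) : ℝ :=
  sInf {D : ℝ | 0 < D ∧ ∀ (n : ℕ) (P : MvPolynomial (Fin n) ℝ),
    P.IsHomogeneous m → lpNorm (2 * m / (m + 1)) P ≤ D * supNorm P}

/-- The real polynomial Bohnenblust–Hille constant `D_{ℝ,m}(n)` in a fixed number `n`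
of variables. -/
noncomputable def BHconstN (m n : ℕ) : ℝ :=
  sInf {D : ℝ | 0 < D ∧ ∀ P : MvPolynomial (Fin n) ℝ,
    P.IsHomogeneous m → lpNorm (2 * m / (m + 1)) P ≤ D * supNorm P}

/-!
For a real `d`-homogeneous `Q`, compare the real and the complex cube: if `|z i| ≤ 1`, then
`|Q z| ^ n = |(Q ^ n) z|` is at most the `ℓ₁` norm of the coefficients of `Q ^ n`, hence, up to the
number of monomials, which is polynomial in `n`, at most `D_{ℝ,dn}(N) ‖Q‖ ^ n`. Taking `dn`-th roots
gives `limsup D_{ℝ,m}(N) ^ (1/m) ≥ (|Q z| / ‖Q‖) ^ (1/d)`, and `Q = x³y - xy³` at `z = (1, i)` has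
`|Q z| = 2` and `‖Q‖ ≤ 2 / √27`.

The real `limsup` is meaningful only for a bounded sequence, so an exponential upper bound for
`D_{ℝ,m}(N)` is needed as well. The mixed finite difference of order `α` at the origin recovers
`α! coeff α P` from the values of `P` on `[0, m]^N`, and by homogeneity these are at most
`m ^ m ‖P‖`.
-/

open Finset
open scoped Nat Topology

section FiniteDifference

variable {R σ : Type*} [CommRing R]

lemma sum_neg_one_pow_mul_choose_mul_eval (f : R → R) (a : ℕ) :
    ∑ j ∈ range (a + 1), (-1) ^ (a - j) * (a.choose j : R) * f j = (fwdDiff 1)^[a] f 0 := by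
  simp [fwdDiff_iter_eq_sum_shift]

lemma exists_lt_of_degree_le_of_ne {α β : σ →₀ ℕ} (h : β.degree ≤ α.degree) (hne : β ≠ α) :
    ∃ k, β k < α k := by
  contrapose! hne
  obtain ⟨γ, rfl⟩ := exists_add_of_le (show α ≤ β from hne)
  have hγ : γ.degree = 0 := by
    rw [map_add] at h
    omega
  rw [(Finsupp.degree_eq_zero_iff γ).1 hγ, add_zero]

variable [Fintype σ] [DecidableEq σ]

/-- The mixed forward difference `Δ^α f` at the origin, where `Δ^α` is the composition over all
variables `k` of the `α k`-th iterate of the unit-step forward difference in the variable `k`. -/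
def mixedFwdDiff (α : σ → ℕ) (f : (σ → R) → R) : R :=
  ∑ t ∈ Fintype.piFinset fun k => range (α k + 1),
    (∏ k, (-1) ^ (α k - t k) * ((α k).choose (t k) : R)) * f fun k => t k

lemma mixedFwdDiff_prod (α : σ → ℕ) (f : σ → R → R) :
    mixedFwdDiff α (fun x => ∏ k, f k (x k)) = ∏ k, (fwdDiff 1)^[α k] (f k) 0 := by
  simp_rw [mixedFwdDiff, ← prod_mul_distrib, ← sum_neg_one_pow_mul_choose_mul_eval]
  exact (prod_univ_sum _ fun k j => (-1) ^ (α k - j) * ((α k).choose j : R) * f k j).symm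

lemma mixedFwdDiff_monomial_self (α : σ → ℕ) :
    mixedFwdDiff α (fun x : σ → R => ∏ k, x k ^ α k) = ∏ k, ((α k)! : R) := by
  simp [mixedFwdDiff_prod α fun k (r : R) => r ^ α k, fwdDiff_iter_eq_factorial]

lemma mixedFwdDiff_monomial_of_lt {α β : σ → ℕ} {k : σ} (hk : β k < α k) :
    mixedFwdDiff α (fun x : σ → R => ∏ k, x k ^ β k) = 0 := by
  rw [mixedFwdDiff_prod α fun k (r : R) => r ^ β k]
  exact prod_eq_zero (mem_univ k) (by rw [fwdDiff_iter_pow_eq_zero_of_lt hk, Pi.zero_apply])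

lemma mixedFwdDiff_eval {P : MvPolynomial σ R} {α : σ →₀ ℕ} (h : P.totalDegree ≤ α.degree) :
    mixedFwdDiff α (fun x => eval x P) = (∏ k, ((α k)! : R)) * coeff α P := by
  have hlin : mixedFwdDiff α (fun x => eval x P) =
      ∑ β ∈ P.support, coeff β P * mixedFwdDiff α (fun x => ∏ k, x k ^ β k) := by
    simp only [mixedFwdDiff, eval_eq', mul_sum]
    rw [sum_comm]
    exact sum_congr rfl fun β _ => sum_congr rfl fun t _ => by ring
  rw [hlin, sum_eq_single α, mixedFwdDiff_monomial_self, mul_comm]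
  · intro β hβ hne
    obtain ⟨k, hk⟩ := exists_lt_of_degree_le_of_ne ((le_totalDegree hβ).trans h) hne
    rw [mixedFwdDiff_monomial_of_lt hk, mul_zero]
  · intro hα
    rw [notMem_support_iff.1 hα, zero_mul]

lemma abs_mixedFwdDiff_le {α : σ → ℕ} {f : (σ → ℝ) → ℝ} {B : ℝ}
    (hf : ∀ t : σ → ℕ, t ≤ α → |f fun k => t k| ≤ B) :
    |mixedFwdDiff α f| ≤ 2 ^ (∑ k, α k) * B := by
  have hweights : ∑ t ∈ Fintype.piFinset fun k => range (α k + 1),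
      ∏ k, ((α k).choose (t k) : ℝ) = 2 ^ ∑ k, α k := by
    rw [← prod_univ_sum (fun k => range (α k + 1)) fun k j => ((α k).choose j : ℝ),
      ← prod_pow_eq_pow_sum]
    exact prod_congr rfl fun k _ => mod_cast Nat.sum_range_choose (α k)
  rw [← hweights, sum_mul]
  refine (abs_sum_le_sum_abs _ _).trans (sum_le_sum fun t ht => ?_)
  have ht' : t ≤ α := fun k => Nat.lt_succ_iff.1 (mem_range.1 (Fintype.mem_piFinset.1 ht k))
  simp only [abs_mul, abs_prod, abs_pow, abs_neg, abs_one, one_pow, one_mul, Nat.abs_cast]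
  exact mul_le_mul_of_nonneg_left (hf t ht') (by positivity)

end FiniteDifference

section Multiindex

variable {σ : Type*} [Fintype σ] [DecidableEq σ]

lemma sum_inv_prod_factorial_piAntidiag (m : ℕ) :
    ∑ k ∈ piAntidiag (univ : Finset σ) m, (∏ i, ((k i)! : ℝ))⁻¹ =
      (Fintype.card σ : ℝ) ^ m / m ! := by
  have hmulti := sum_pow_eq_sum_piAntidiag univ (fun _ : σ => (1 : ℝ)) m
  simp only [sum_const, card_univ, nsmul_eq_mul, mul_one, one_pow, prod_const_one] at hmulti
  rw [hmulti, sum_div]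
  refine sum_congr rfl fun k hk => ?_
  have hspec : (∏ i, ((k i)! : ℝ)) * Nat.multinomial univ k = m ! := by
    rw [← (mem_piAntidiag.1 hk).1]
    exact mod_cast Nat.multinomial_spec univ k
  have hpos : (0 : ℝ) < ∏ i, ((k i)! : ℝ) := prod_pos fun i _ => mod_cast Nat.factorial_pos _
  rw [eq_div_iff (by positivity), ← hspec, inv_mul_cancel_left₀ hpos.ne']

lemma card_piAntidiag_univ_le (m : ℕ) :
    #(piAntidiag (univ : Finset σ) m) ≤ (m + 1) ^ Fintype.card σ := by
  calc #(piAntidiag (univ : Finset σ) m)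
      ≤ #(Fintype.piFinset fun _ : σ => range (m + 1)) := by
        refine card_le_card fun k hk => Fintype.mem_piFinset.2 fun i => mem_range.2 ?_
        rw [Nat.lt_succ_iff, ← (mem_piAntidiag.1 hk).1]
        exact single_le_sum (fun _ _ => Nat.zero_le _) (mem_univ i)
    _ = (m + 1) ^ Fintype.card σ := by simp

variable {R : Type*} [CommSemiring R] {m : ℕ} {P : MvPolynomial σ R}

lemma map_support_subset_piAntidiag (hP : P.IsHomogeneous m) :
    P.support.map ⟨fun α : σ →₀ ℕ => ⇑α, DFunLike.coe_injective⟩ ⊆ piAntidiag univ m := by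
  intro k hk
  obtain ⟨α, hα, rfl⟩ := mem_map.1 hk
  have hdeg : α.degree = m := (hP.degree_eq_sum_deg_support hα).symm
  simp [← hdeg, Finsupp.degree_eq_sum]

omit [DecidableEq σ] in
lemma card_support_le_of_isHomogeneous (hP : P.IsHomogeneous m) :
    #P.support ≤ (m + 1) ^ Fintype.card σ := by
  classical
  rw [← card_map]
  exact (card_le_card (map_support_subset_piAntidiag hP)).trans (card_piAntidiag_univ_le m)

omit [DecidableEq σ] in
lemma sum_support_inv_prod_factorial_le (hP : P.IsHomogeneous m) :
    ∑ α ∈ P.support, (∏ i, ((α i)! : ℝ))⁻¹ ≤ (Fintype.card σ : ℝ) ^ m / m ! := by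
  classical
  rw [← sum_inv_prod_factorial_piAntidiag]
  have hsubset := sum_le_sum_of_subset_of_nonneg (map_support_subset_piAntidiag hP)
    fun (k : σ → ℕ) _ _ => (by positivity : 0 ≤ (∏ i, ((k i)! : ℝ))⁻¹)
  rwa [sum_map] at hsubset

end Multiindex

lemma eval_smul_of_isHomogeneous {R σ : Type*} [CommSemiring R] {m : ℕ} {P : MvPolynomial σ R}
    (hP : P.IsHomogeneous m) (r : R) (x : σ → R) : eval (r • x) P = r ^ m * eval x P := by
  rw [eval_eq, eval_eq, mul_sum]
  refine sum_congr rfl fun α hα => ?_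
  simp_rw [Pi.smul_apply, smul_eq_mul, mul_pow, prod_mul_distrib, prod_pow_eq_pow_sum]
  rw [← hP.degree_eq_sum_deg_support hα]
  ring

section CoefficientNorm

variable {n : ℕ} (P : MvPolynomial (Fin n) ℝ) {p q : ℝ}

lemma lpNorm_nonneg (p : ℝ) : 0 ≤ lpNorm p P := by
  unfold lpNorm
  positivity

lemma lpNorm_rpow (hp : p ≠ 0) : lpNorm p P ^ p = ∑ α ∈ P.support, |coeff α P| ^ p := by
  rw [lpNorm, one_div, Real.rpow_inv_rpow (by positivity) hp]

lemma lpNorm_one : lpNorm 1 P = ∑ α ∈ P.support, |coeff α P| := by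
  simp [lpNorm]

lemma abs_coeff_le_lpNorm (hp : 0 < p) (α : Fin n →₀ ℕ) : |coeff α P| ≤ lpNorm p P := by
  by_cases hα : α ∈ P.support
  · rw [← Real.rpow_le_rpow_iff (abs_nonneg _) (lpNorm_nonneg P p) hp, lpNorm_rpow P hp.ne']
    exact single_le_sum (f := fun α => |coeff α P| ^ p) (fun _ _ => by positivity) hα
  · rw [notMem_support_iff.1 hα, abs_zero]
    exact lpNorm_nonneg P p

lemma lpNorm_anti (hp : 0 < p) (hpq : p ≤ q) : lpNorm q P ≤ lpNorm p P := by
  have hq : 0 < q := hp.trans_le hpq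
  have hsplit {x : ℝ} (hx : 0 ≤ x) : x ^ q = x ^ (q - p) * x ^ p := by
    rw [← Real.rpow_add_of_nonneg hx (sub_nonneg.2 hpq) hp.le, sub_add_cancel]
  rw [← Real.rpow_le_rpow_iff (lpNorm_nonneg P q) (lpNorm_nonneg P p) hq]
  calc lpNorm q P ^ q = ∑ α ∈ P.support, |coeff α P| ^ (q - p) * |coeff α P| ^ p := by
        simp_rw [lpNorm_rpow P hq.ne', hsplit (abs_nonneg _)]
    _ ≤ ∑ α ∈ P.support, lpNorm p P ^ (q - p) * |coeff α P| ^ p := by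
        gcongr with α
        exact abs_coeff_le_lpNorm P hp α
    _ = lpNorm p P ^ q := by
        rw [← mul_sum, ← lpNorm_rpow P hp.ne', hsplit (lpNorm_nonneg P p)]

lemma lpNorm_one_le_card_mul (hp : 0 < p) : lpNorm 1 P ≤ #P.support * lpNorm p P := by
  rw [lpNorm_one, ← nsmul_eq_mul]
  exact sum_le_card_nsmul _ _ _ fun α _ => abs_coeff_le_lpNorm P hp α

lemma norm_aeval_le_lpNorm_one {A : Type*} [NormedCommRing A] [NormOneClass A] [NormedAlgebra ℝ A]
    {z : Fin n → A} (hz : ∀ i, ‖z i‖ ≤ 1) : ‖aeval z P‖ ≤ lpNorm 1 P := by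
  rw [lpNorm_one, aeval_def, eval₂_eq]
  refine norm_sum_le_of_le _ fun α _ => ?_
  rw [← Algebra.smul_def, norm_smul, Real.norm_eq_abs]
  refine mul_le_of_le_one_right (abs_nonneg _) ((Finset.norm_prod_le _ _).trans ?_)
  exact prod_le_one (fun _ _ => norm_nonneg _) fun i _ =>
    (norm_pow_le _ _).trans (pow_le_one₀ (norm_nonneg _) (hz i))

end CoefficientNorm

section SupNorm

variable {n m : ℕ} {P : MvPolynomial (Fin n) ℝ}

lemma abs_eval_le_supNorm (P : MvPolynomial (Fin n) ℝ) {x : Fin n → ℝ} (hx : ∀ i, |x i| ≤ 1) :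
    |eval x P| ≤ supNorm P := by
  refine le_csSup ⟨lpNorm 1 P, ?_⟩ ⟨x, hx, rfl⟩
  rintro _ ⟨y, hy, rfl⟩
  simpa [aeval_eq_eval] using norm_aeval_le_lpNorm_one P (z := y) hy

lemma supNorm_nonneg (P : MvPolynomial (Fin n) ℝ) : 0 ≤ supNorm P :=
  (abs_nonneg _).trans (abs_eval_le_supNorm P (x := 0) (by simp))

lemma supNorm_le {M : ℝ} (hM : ∀ x : Fin n → ℝ, (∀ i, |x i| ≤ 1) → |eval x P| ≤ M) :
    supNorm P ≤ M := by
  refine csSup_le ⟨_, 0, by simp, rfl⟩ ?_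
  rintro _ ⟨x, hx, rfl⟩
  exact hM x hx

lemma supNorm_pow_le (P : MvPolynomial (Fin n) ℝ) (k : ℕ) : supNorm (P ^ k) ≤ supNorm P ^ k :=
  supNorm_le fun x hx => by
    rw [map_pow, abs_pow]
    exact pow_le_pow_left₀ (abs_nonneg _) (abs_eval_le_supNorm P hx) k

lemma abs_eval_le_pow_mul_supNorm (hP : P.IsHomogeneous m) {r : ℝ} {x : Fin n → ℝ} (hr : 0 ≤ r)
    (hx : ∀ i, |x i| ≤ r) : |eval x P| ≤ r ^ m * supNorm P := by
  have hscale : x = r • r⁻¹ • x := by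
    rcases hr.eq_or_lt with rfl | hr
    · ext i
      simpa using hx i
    · rw [smul_inv_smul₀ hr.ne']
  have hcube (i : Fin n) : |(r⁻¹ • x) i| ≤ 1 := by
    rw [Pi.smul_apply, smul_eq_mul, abs_mul, abs_of_nonneg (inv_nonneg.2 hr)]
    exact inv_mul_le_one_of_le₀ (hx i) hr
  rw [hscale, eval_smul_of_isHomogeneous hP, abs_mul, abs_of_nonneg (by positivity)]
  exact mul_le_mul_of_nonneg_left (abs_eval_le_supNorm P hcube) (by positivity)

lemma abs_coeff_le_of_isHomogeneous (hP : P.IsHomogeneous m) {α : Fin n →₀ ℕ}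
    (hα : α.degree = m) :
    |coeff α P| ≤ (2 * m) ^ m * supNorm P * (∏ k, ((α k)! : ℝ))⁻¹ := by
  have hsum : ∑ k, α k = m := by rw [← Finsupp.degree_eq_sum, hα]
  have hbox (t : Fin n → ℕ) (ht : t ≤ α) :
      |eval (fun k => (t k : ℝ)) P| ≤ (m : ℝ) ^ m * supNorm P := by
    refine abs_eval_le_pow_mul_supNorm hP m.cast_nonneg fun k => ?_
    rw [Nat.abs_cast, Nat.cast_le, ← hsum]
    exact (ht k).trans (single_le_sum (fun _ _ => Nat.zero_le _) (mem_univ k))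
  have hdiff := abs_mixedFwdDiff_le (f := fun x => eval x P) hbox
  rw [mixedFwdDiff_eval (hP.totalDegree_le.trans_eq hα.symm), hsum, abs_mul, abs_prod,
    ← mul_assoc, ← mul_pow] at hdiff
  simp only [Nat.abs_cast] at hdiff
  rwa [← div_eq_mul_inv, le_div_iff₀' (prod_pos fun k _ => by positivity)]

lemma lpNorm_one_le_exp_pow_mul_supNorm (hP : P.IsHomogeneous m) :
    lpNorm 1 P ≤ Real.exp (2 * n) ^ m * supNorm P := by
  have hS := supNorm_nonneg P
  calc lpNorm 1 P
      ≤ ∑ α ∈ P.support, (2 * m) ^ m * supNorm P * (∏ k, ((α k)! : ℝ))⁻¹ := by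
        rw [lpNorm_one]
        exact sum_le_sum fun α hα =>
          abs_coeff_le_of_isHomogeneous hP (hP.degree_eq_sum_deg_support hα).symm
    _ ≤ (2 * m) ^ m * supNorm P * ((n : ℝ) ^ m / m !) := by
        rw [← mul_sum]
        gcongr
        simpa using sum_support_inv_prod_factorial_le hP
    _ = (m * (2 * n)) ^ m / m ! * supNorm P := by ring
    _ ≤ Real.exp (m * (2 * n)) * supNorm P := by
        gcongr
        exact Real.pow_div_factorial_le_exp _ (by positivity) m
    _ = Real.exp (2 * n) ^ m * supNorm P := by rw [Real.exp_nat_mul]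

end SupNorm

section BohnenblustHille

variable {m n : ℕ}

lemma one_le_bohnenblustHille_exponent (hm : m ≠ 0) : 1 ≤ (2 * m / (m + 1) : ℝ) := by
  have hm1 : (1 : ℝ) ≤ m := mod_cast Nat.one_le_iff_ne_zero.2 hm
  rw [le_div_iff₀ (by positivity)]
  linarith

lemma lpNorm_le_exp_pow_mul_supNorm (hm : m ≠ 0) {P : MvPolynomial (Fin n) ℝ}
    (hP : P.IsHomogeneous m) :
    lpNorm (2 * m / (m + 1)) P ≤ Real.exp (2 * n) ^ m * supNorm P :=
  (lpNorm_anti P one_pos (one_le_bohnenblustHille_exponent hm)).trans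
    (lpNorm_one_le_exp_pow_mul_supNorm hP)

lemma BHconstN_nonneg (m n : ℕ) : 0 ≤ BHconstN m n :=
  Real.sInf_nonneg fun _ hD => hD.1.le

lemma BHconstN_le_exp_pow (hm : m ≠ 0) (n : ℕ) : BHconstN m n ≤ Real.exp (2 * n) ^ m :=
  csInf_le ⟨0, fun _ hD => hD.1.le⟩ ⟨by positivity, fun _ => lpNorm_le_exp_pow_mul_supNorm hm⟩

lemma lpNorm_le_BHconstN_mul_supNorm (hm : m ≠ 0) {P : MvPolynomial (Fin n) ℝ}
    (hP : P.IsHomogeneous m) :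
    lpNorm (2 * m / (m + 1)) P ≤ BHconstN m n * supNorm P := by
  rcases (supNorm_nonneg P).eq_or_lt with hS | hS
  · simpa [← hS] using lpNorm_le_exp_pow_mul_supNorm hm hP
  · rw [← div_le_iff₀ hS]
    refine le_csInf ⟨_, by positivity, fun _ => lpNorm_le_exp_pow_mul_supNorm hm⟩ fun D hD => ?_
    exact (div_le_iff₀ hS).2 (hD.2 P hP)

lemma norm_aeval_le_BHconstN_mul_supNorm (hm : m ≠ 0) {P : MvPolynomial (Fin n) ℝ}
    (hP : P.IsHomogeneous m) {z : Fin n → ℂ} (hz : ∀ i, ‖z i‖ ≤ 1) :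
    ‖aeval z P‖ ≤ (m + 1) ^ n * BHconstN m n * supNorm P := by
  have hcard : (#P.support : ℝ) ≤ (m + 1) ^ n := by
    exact_mod_cast Fintype.card_fin n ▸ card_support_le_of_isHomogeneous hP
  calc ‖aeval z P‖ ≤ lpNorm 1 P := norm_aeval_le_lpNorm_one P hz
    _ ≤ #P.support * lpNorm (2 * m / (m + 1)) P :=
        lpNorm_one_le_card_mul P (one_pos.trans_le (one_le_bohnenblustHille_exponent hm))
    _ ≤ (m + 1) ^ n * (BHconstN m n * supNorm P) :=
        mul_le_mul hcard (lpNorm_le_BHconstN_mul_supNorm hm hP) (lpNorm_nonneg P _) (by positivity)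
    _ = (m + 1) ^ n * BHconstN m n * supNorm P := by ring

end BohnenblustHille

section Limsup

lemma isBoundedUnder_BHconstN_rpow_inv (n : ℕ) :
    IsBoundedUnder (· ≤ ·) atTop fun m : ℕ => BHconstN m n ^ (m : ℝ)⁻¹ := by
  refine isBoundedUnder_of_eventually_le (a := Real.exp (2 * n)) ?_
  filter_upwards [eventually_ne_atTop 0] with m hm
  rw [Real.rpow_inv_le_iff_of_pos (BHconstN_nonneg m n) (by positivity) (by positivity),
    Real.rpow_natCast]
  exact BHconstN_le_exp_pow hm n

lemma tendsto_add_one_pow_rpow_inv (N : ℕ) :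
    Tendsto (fun m : ℕ => (((m : ℝ) + 1) ^ N) ^ (m : ℝ)⁻¹) atTop (𝓝 1) := by
  have hlim := (tendsto_rpow_div_mul_add N 1 (-1) zero_ne_one).comp
    (tendsto_atTop_add_const_right atTop (1 : ℝ) tendsto_natCast_atTop_atTop)
  refine hlim.congr fun m => ?_
  rw [← Real.rpow_natCast, ← Real.rpow_mul (by positivity)]
  simp [div_eq_mul_inv]

variable {N d : ℕ} {Q : MvPolynomial (Fin N) ℝ} {M : ℝ} {z : Fin N → ℂ}

lemma norm_aeval_div_pow_le (hd : d ≠ 0) (hQ : Q.IsHomogeneous d) (hM : supNorm Q ≤ M)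
    (hz : ∀ i, ‖z i‖ ≤ 1) {n : ℕ} (hn : n ≠ 0) :
    (‖aeval z Q‖ / M) ^ n ≤ ((d * n : ℕ) + 1) ^ N * BHconstN (d * n) N := by
  have hM0 : 0 ≤ M := (supNorm_nonneg Q).trans hM
  have hD := BHconstN_nonneg (d * n) N
  rw [div_pow, ← norm_pow, ← map_pow]
  refine div_le_of_le_mul₀ (by positivity) (by positivity) ?_
  refine (norm_aeval_le_BHconstN_mul_supNorm (mul_ne_zero hd hn) (hQ.pow n) hz).trans ?_
  gcongr
  exact (supNorm_pow_le Q n).trans (pow_le_pow_left₀ (supNorm_nonneg Q) hM n)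

lemma norm_aeval_div_rpow_inv_div_le (hd : d ≠ 0) (hQ : Q.IsHomogeneous d) (hM : supNorm Q ≤ M)
    (hz : ∀ i, ‖z i‖ ≤ 1) {n : ℕ} (hn : n ≠ 0) :
    (‖aeval z Q‖ / M) ^ (d : ℝ)⁻¹ / ((((d * n : ℕ) : ℝ) + 1) ^ N) ^ ((d * n : ℕ) : ℝ)⁻¹ ≤
      BHconstN (d * n) N ^ ((d * n : ℕ) : ℝ)⁻¹ := by
  have hr : 0 ≤ ‖aeval z Q‖ / M := div_nonneg (norm_nonneg _) ((supNorm_nonneg Q).trans hM)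
  rw [div_le_iff₀' (by positivity), ← Real.mul_rpow (by positivity) (BHconstN_nonneg _ _)]
  calc (‖aeval z Q‖ / M) ^ (d : ℝ)⁻¹ = ((‖aeval z Q‖ / M) ^ n) ^ ((d * n : ℕ) : ℝ)⁻¹ := by
        rw [← Real.rpow_natCast, ← Real.rpow_mul hr]
        push_cast
        field_simp
    _ ≤ ((((d * n : ℕ) : ℝ) + 1) ^ N * BHconstN (d * n) N) ^ ((d * n : ℕ) : ℝ)⁻¹ := by
        gcongr
        exact norm_aeval_div_pow_le hd hQ hM hz hn

theorem norm_aeval_div_rpow_inv_le_limsup_BHconstN (hd : d ≠ 0) (hQ : Q.IsHomogeneous d)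
    (hM : supNorm Q ≤ M) (hz : ∀ i, ‖z i‖ ≤ 1) :
    (‖aeval z Q‖ / M) ^ (d : ℝ)⁻¹ ≤ limsup (fun m : ℕ => BHconstN m N ^ (m : ℝ)⁻¹) atTop := by
  have hmul : Tendsto (fun n => d * n) atTop atTop :=
    tendsto_id.const_mul_atTop' (Nat.pos_of_ne_zero hd)
  have hlim := (tendsto_const_nhds (x := (‖aeval z Q‖ / M) ^ (d : ℝ)⁻¹)).div
    ((tendsto_add_one_pow_rpow_inv N).comp hmul) one_ne_zero
  rw [div_one] at hlim
  refine le_of_forall_lt_imp_le_of_dense fun b hb =>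
    le_limsup_of_frequently_le (hmul.frequently (Eventually.frequently ?_))
      (isBoundedUnder_BHconstN_rpow_inv N)
  filter_upwards [hlim.eventually_const_lt hb, eventually_ne_atTop 0] with n hbn hn
  exact hbn.le.trans (norm_aeval_div_rpow_inv_div_le hd hQ hM hz hn)

end Limsup

section Quartic

lemma mul_mul_sub_sq_le {a b : ℝ} (hb : 0 ≤ b) (hba : b ≤ a) (ha : a ≤ 1) :
    a * b * (a - b) ^ 2 ≤ 4 / 27 := by
  calc a * b * (a - b) ^ 2 ≤ 1 * b * (1 - b) ^ 2 := by gcongr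
    _ = 4 / 27 - (b - 1 / 3) ^ 2 * (4 / 3 - b) := by ring
    _ ≤ 4 / 27 := sub_le_self _ (mul_nonneg (sq_nonneg _) (by linarith))

lemma abs_cube_mul_sub_mul_cube_le {x y : ℝ} (hx : |x| ≤ 1) (hy : |y| ≤ 1) :
    |x ^ 3 * y - x * y ^ 3| ≤ 2 / √27 := by
  have hx2 : x ^ 2 ≤ 1 := (sq_le_one_iff_abs_le_one x).2 hx
  have hy2 : y ^ 2 ≤ 1 := (sq_le_one_iff_abs_le_one y).2 hy
  refine abs_le_of_sq_le_sq ?_ (by positivity)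
  rw [div_pow, Real.sq_sqrt (by norm_num)]
  rcases le_total (y ^ 2) (x ^ 2) with hxy | hxy
  · linarith [mul_mul_sub_sq_le (sq_nonneg y) hxy hx2]
  · linarith [mul_mul_sub_sq_le (sq_nonneg x) hxy hy2]

/-- The quartic form `x³y - xy³` in the variables `x = X i` and `y = X j`; it is small on the real
cube compared with its value at `(x, y) = (1, √-1)` on the complex one. -/
noncomputable def quarticForm {σ : Type*} (i j : σ) : MvPolynomial σ ℝ :=
  X i ^ 3 * X j - X i * X j ^ 3

lemma quarticForm_isHomogeneous {σ : Type*} (i j : σ) : (quarticForm i j).IsHomogeneous 4 :=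
  (((isHomogeneous_X ℝ i).pow 3).mul (isHomogeneous_X ℝ j)).sub
    ((isHomogeneous_X ℝ i).mul ((isHomogeneous_X ℝ j).pow 3))

lemma supNorm_quarticForm_le {n : ℕ} (i j : Fin n) : supNorm (quarticForm i j) ≤ 2 / √27 :=
  supNorm_le fun x hx => by simpa [quarticForm] using abs_cube_mul_sub_mul_cube_le (hx i) (hx j)

lemma norm_aeval_quarticForm {σ : Type*} [DecidableEq σ] {i j : σ} (hij : i ≠ j) :
    ‖aeval (Function.update (1 : σ → ℂ) j Complex.I) (quarticForm i j)‖ = 2 := by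
  have hval : aeval (Function.update (1 : σ → ℂ) j Complex.I) (quarticForm i j) =
      2 * Complex.I := by
    simp [quarticForm, hij, Complex.I_pow_three, two_mul]
  simp [hval]

end Quartic

/-- For every fixed integer `N ≥ 2`, `limsup_{m→∞} D_{ℝ,m}(N)^{1/m} ≥ 27^{1/8}`;
in particular the real polynomial Bohnenblust–Hille inequality in `N` variables has
exponentially growing constants. -/
theorem real_BH_limsup_fixed_dim (N : ℕ) (hN : 2 ≤ N) :
    (27 : ℝ) ^ ((1 : ℝ) / 8) ≤ limsup (fun m : ℕ => BHconstN m N ^ ((m : ℝ)⁻¹)) atTop := by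
  let i : Fin N := ⟨0, by omega⟩
  let j : Fin N := ⟨1, by omega⟩
  have hij : i ≠ j := by simp [i, j]
  have hz (k : Fin N) : ‖Function.update (1 : Fin N → ℂ) j Complex.I k‖ ≤ 1 := by
    rcases eq_or_ne k j with rfl | hk <;> simp [*]
  have hlower := norm_aeval_div_rpow_inv_le_limsup_BHconstN four_ne_zero
    (quarticForm_isHomogeneous i j) (supNorm_quarticForm_le i j) hz
  rw [norm_aeval_quarticForm hij, div_div_cancel₀ two_ne_zero] at hlower
  calc (27 : ℝ) ^ ((1 : ℝ) / 8) = √27 ^ ((4 : ℕ) : ℝ)⁻¹ := by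
        rw [Real.sqrt_eq_rpow, ← Real.rpow_mul (by norm_num)]
        norm_num
    _ ≤ limsup (fun m : ℕ => BHconstN m N ^ ((m : ℝ)⁻¹)) atTop := hlower
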